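/- arXiv:1802.09490 — 2 statements merged into one kernel-verified Lean document; each statement's English description precedes it below -/
import Mathlib

section
/- In a Fragile CPR game at tax rate t = 0, let x_OPT = (x_{1,OPT},…,x_{n,OPT}) ∈ [0,1]^n be any profile maximizing the social welfare Ψ(x) = Σ_i x_i^{α_i} f_i(x_T, 0) over [0,1]^n, and let x^0_OPT be its total investment. Then x^0_OPT ≤ x^0_NE, where x^0_NE is the total investment at the unique pure Nash equilibrium at t = 0. This holds for heterogeneous prospect-theoretic preferences α_i ∈ (0,1], k_i > 0. -/
/-!
Write `F_i(x) = f_i(x, 0)`. On `[0, 1)` one has `F_i + k_i = (1 - p) (r ^ α_i + k_i)`, a product of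
two positive concave functions, so `log (F_i + k_i)` is concave there
(`concaveOn_log_effRate_add`). Consequently `-F_i' / F_i` is nondecreasing along `u < v` as soon as
`F_i(u), F_i(v) > 0` and `F_i'(u) < 0` (`deriv_cross_le`).

Let `X` and `N` be the totals at the optimum and at the equilibrium. Since `t̄ > 0`, the optimal
welfare is positive, and this forces `X < 1`. Suppose `N < X`. The first-order condition of the
optimum reads `α_j x_j ^ (α_j - 1) F_j(X) = D` for every `j` with `x_j > 0`, where
`D = -∑ i, x_i ^ α_i F_i'(X)` does not depend on `j`; positivity of the welfare then gives
`F_j(X) > 0` for all these `j`. As player `j` could have moved the equilibrium total to `X`, she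
has a positive investment `n_j` and `F_j(N) > 0`, and her own first-order condition is
`α_j F_j(N) + n_j F_j'(N) = 0`. Log-concavity makes every `F_i'(X)` with `x_i > 0` negative, so
dropping the terms `i ≠ j` of `D` yields `x_j ≤ α_j F_j(X) / (-F_j'(X)) ≤ n_j`. Summing over `j`
gives `X ≤ N`, a contradiction.
-/

open Real Set

noncomputable section

/-- Effective rate of return of a player with sensitivity `α` and loss aversion `k`,
at utilization `x` and tax rate `t`. -/
def effRate (p r : ℝ → ℝ) (α k x t : ℝ) : ℝ :=
  if 0 ≤ r x - t then
    (r x - t) ^ α * (1 - p x) - k * (1 + t) ^ α * p x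
  else
    -(k * ((t - r x) ^ α * (1 - p x) + (1 + t) ^ α * p x))

/-- Partial derivative of the effective rate of return in the utilization. -/
def effRateDx (p r : ℝ → ℝ) (α k x t : ℝ) : ℝ :=
  deriv (fun z => effRate p r α k z t) x

/-- `g_i(x,t) = α_i f_i(x,t) / (−f_{i,x}(x,t))`. -/
def gFun (p r : ℝ → ℝ) (α k x t : ℝ) : ℝ :=
  α * effRate p r α k x t / (-effRateDx p r α k x t)

/-- Standing assumptions on the failure probability `p`. -/
structure FailureProb (p : ℝ → ℝ) : Prop where
  convexOn : ConvexOn ℝ (Ico (0:ℝ) 1) p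
  strictMonoOn : StrictMonoOn p (Ico (0:ℝ) 1)
  contDiffOn : ContDiffOn ℝ 1 p (Ico (0:ℝ) 1)
  eq_one : ∀ x : ℝ, 1 ≤ x → p x = 1
  mem_unit : ∀ x : ℝ, p x ∈ Icc (0:ℝ) 1

/-- Standing assumptions on the rate of return `r`. -/
structure RateOfReturn (r : ℝ → ℝ) : Prop where
  concaveOn : ConcaveOn ℝ (Icc (0:ℝ) 1) r
  pos : ∀ x ∈ Icc (0:ℝ) 1, 0 < r x
  strictMonoOrAnti : StrictMonoOn r (Icc (0:ℝ) 1) ∨ StrictAntiOn r (Icc (0:ℝ) 1)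
  contDiffOn : ContDiffOn ℝ 1 r (Icc (0:ℝ) 1)

/-- `S_t`: the set of utilizations `x ∈ [0,1]` with `r(x) − t ≥ 0`. -/
def St (r : ℝ → ℝ) (t : ℝ) : Set ℝ := {x | x ∈ Icc (0:ℝ) 1 ∧ 0 ≤ r x - t}

/-- The maximal tax rate `t̄` of the game. -/
def tbar {ι : Type*} [Fintype ι] (p r : ℝ → ℝ) (α k : ι → ℝ) : ℝ :=
  sSup {t : ℝ | 0 ≤ t ∧ ∃ i : ι, ∃ x ∈ Icc (0:ℝ) 1, 0 < effRate p r (α i) (k i) x t}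

/-- The maximal tax rate `t̄_i` of a single player. -/
def tbarI (p r : ℝ → ℝ) (α k : ℝ) : ℝ :=
  sSup {t : ℝ | 0 ≤ t ∧ ∃ x ∈ St r t, 0 < effRate p r α k x t}

/-- `a_t` for a strictly increasing rate of return. -/
def aT (r : ℝ → ℝ) (t : ℝ) : ℝ :=
  if t ≤ r 0 then 0 else sInf {x | x ∈ Icc (0:ℝ) 1 ∧ r x = t}

/-- The threshold `y^t_i` for a strictly decreasing rate of return. -/
def yT (p r : ℝ → ℝ) (α k t : ℝ) : ℝ :=
  if effRate p r α k 0 t ≤ 0 then 0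
  else sInf {x | x ∈ St r t ∧ effRate p r α k x t = 0}

/-- `ĝ_i(x,t)`, for a strictly decreasing rate of return. -/
def gHat (p r : ℝ → ℝ) (α k x t : ℝ) : ℝ :=
  if x < yT p r α k t then gFun p r α k x t else 0

/-- The function `q_i(x,t)` for strictly increasing rate of return. -/
def qFun (p r : ℝ → ℝ) (α x t : ℝ) : ℝ :=
  deriv r x * (1 - p x) ^ 2 /
      ((r x + 1) * deriv p x - α * deriv r x * (1 - p x) * p x) *
    ((1 + t) / (r x - t)) ^ (1 - α)

/-- `b` is a best response of a player (parameters `α`, `k`) to the others' total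
investment `xbar` at tax rate `t`. -/
def IsBestResponse (p r : ℝ → ℝ) (α k t xbar b : ℝ) : Prop :=
  b ∈ Icc (0:ℝ) 1 ∧
    ∀ y ∈ Icc (0:ℝ) 1,
      y ^ α * effRate p r α k (y + xbar) t ≤ b ^ α * effRate p r α k (b + xbar) t

/-- Pure Nash equilibrium of the Fragile CPR game at tax rate `t`. -/
def IsPNE {ι : Type*} [Fintype ι] [DecidableEq ι] (p r : ℝ → ℝ) (α k : ι → ℝ)
    (t : ℝ) (x : ι → ℝ) : Prop :=
  (∀ i, x i ∈ Icc (0:ℝ) 1) ∧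
    ∀ i, ∀ y ∈ Icc (0:ℝ) 1,
      y ^ α i * effRate p r (α i) (k i) (y + ∑ j ∈ Finset.univ.erase i, x j) t ≤
        x i ^ α i * effRate p r (α i) (k i) (x i + ∑ j ∈ Finset.univ.erase i, x j) t

/-- `y` is the threshold `y^t_i` of a player, as defined in the paper for the
increasing and decreasing cases of the rate of return. -/
def IsThresholdY (p r : ℝ → ℝ) (α k t y : ℝ) : Prop :=
  (StrictMonoOn r (Icc (0:ℝ) 1) →
    ((∀ x ∈ St r t, effRate p r α k x t ≤ 0) → y = 0) ∧
    ((∃ x ∈ St r t, 0 < effRate p r α k x t) →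
      ∃ z ∈ St r t, IsMaxOn (fun x => effRate p r α k x t) (St r t) z ∧
        y ∈ Ioo z 1 ∧ effRate p r α k y t = 0)) ∧
  (StrictAntiOn r (Icc (0:ℝ) 1) →
    ((effRate p r α k 0 t ≤ 0) → y = 0) ∧
    ((0 < effRate p r α k 0 t) → y ∈ St r t ∧ effRate p r α k y t = 0))

/-- Pure Nash equilibrium under player-specific tax sensitivities `γ_i`
(all players have `α = 1` and common loss aversion `k`). -/
def IsPNEgamma {ι : Type*} [Fintype ι] [DecidableEq ι] (p r : ℝ → ℝ) (k t : ℝ)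
    (γ : ι → ℝ) (x : ι → ℝ) : Prop :=
  (∀ i, x i ∈ Icc (0:ℝ) 1) ∧
    ∀ i, ∀ y ∈ Icc (0:ℝ) 1,
      y * effRate p r 1 k (y + ∑ j ∈ Finset.univ.erase i, x j) (γ i * t) ≤
        x i * effRate p r 1 k (x i + ∑ j ∈ Finset.univ.erase i, x j) (γ i * t)

/-! ### The rate of return without taxes -/

lemma FailureProb.lt_one {p : ℝ → ℝ} (hp : FailureProb p) {x : ℝ} (hx : x ∈ Ico (0:ℝ) 1) :
    p x < 1 := by
  have hmem : (x + 1) / 2 ∈ Ico (0:ℝ) 1 := ⟨by linarith [hx.1], by linarith [hx.2]⟩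
  have h1 := hp.strictMonoOn hx hmem (by linarith [hx.2])
  exact h1.trans_le (hp.mem_unit _).2

lemma effRate_zero_eq {p r : ℝ → ℝ} (hr : RateOfReturn r) (α k : ℝ) {x : ℝ}
    (hx : x ∈ Icc (0:ℝ) 1) :
    effRate p r α k x 0 = r x ^ α * (1 - p x) - k * p x := by
  have := hr.pos x hx
  simp [effRate, this.le]

lemma effRate_zero_add_eq {p r : ℝ → ℝ} (hr : RateOfReturn r) (α k : ℝ) {x : ℝ}
    (hx : x ∈ Icc (0:ℝ) 1) :
    effRate p r α k x 0 + k = (1 - p x) * (r x ^ α + k) := by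
  rw [effRate_zero_eq hr α k hx]; ring

lemma effRate_zero_of_one_le {p r : ℝ → ℝ} (hp : FailureProb p) (α k : ℝ) {x : ℝ}
    (hx : 1 ≤ x) : effRate p r α k x 0 = -k := by
  simp [effRate, hp.eq_one x hx]

lemma continuousOn_effRate_zero {p r : ℝ → ℝ} (hp : FailureProb p) (hr : RateOfReturn r)
    (α k : ℝ) : ContinuousOn (fun x => effRate p r α k x 0) (Ico (0:ℝ) 1) := by
  have hpc := hp.contDiffOn.continuousOn
  have hrc := hr.contDiffOn.continuousOn.mono (Ico_subset_Icc_self)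
  have h : ContinuousOn (fun x => r x ^ α * (1 - p x) - k * p x) (Ico (0:ℝ) 1) :=
    ((hrc.rpow_const fun x hx => Or.inl (hr.pos x (Ico_subset_Icc_self hx)).ne').mul
      (continuousOn_const.sub hpc)).sub (continuousOn_const.mul hpc)
  exact h.congr fun x hx => effRate_zero_eq hr α k (Ico_subset_Icc_self hx)

lemma differentiableAt_effRate_zero {p r : ℝ → ℝ} (hp : FailureProb p) (hr : RateOfReturn r)
    (α k : ℝ) {x : ℝ} (hx : x ∈ Ioo (0:ℝ) 1) :
    DifferentiableAt ℝ (fun x => effRate p r α k x 0) x := by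
  have hpd : DifferentiableAt ℝ p x :=
    (hp.contDiffOn.differentiableOn one_ne_zero).differentiableAt (Ico_mem_nhds hx.1 hx.2)
  have hrd : DifferentiableAt ℝ r x :=
    (hr.contDiffOn.differentiableOn one_ne_zero).differentiableAt (Icc_mem_nhds hx.1 hx.2)
  have hpos := hr.pos x (Ioo_subset_Icc_self hx)
  have h : DifferentiableAt ℝ (fun x => r x ^ α * (1 - p x) - k * p x) x :=
    ((hrd.rpow_const (Or.inl hpos.ne')).mul (hpd.const_sub 1)).sub (hpd.const_mul k)
  refine h.congr_of_eventuallyEq ?_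
  filter_upwards [Icc_mem_nhds hx.1 hx.2] with y hy
  exact effRate_zero_eq hr α k hy

/-! ### Log-concavity -/

lemma concaveOn_comp_of_mapsTo {s T : Set ℝ} {a g : ℝ → ℝ} (ha : ConcaveOn ℝ s a)
    (hg : ConcaveOn ℝ T g) (hmono : MonotoneOn g T) (hm : MapsTo a s T) :
    ConcaveOn ℝ s (fun x => g (a x)) := by
  refine ⟨ha.1, fun x hx y hy b c hb hc hbc => ?_⟩
  exact (hg.2 (hm hx) (hm hy) hb hc hbc).trans
    (hmono (hg.1 (hm hx) (hm hy) hb hc hbc) (hm (ha.1 hx hy hb hc hbc)) (ha.2 hx hy hb hc hbc))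

lemma concaveOn_log_comp {s : Set ℝ} {a : ℝ → ℝ} (ha : ConcaveOn ℝ s a)
    (hpos : ∀ x ∈ s, 0 < a x) : ConcaveOn ℝ s (fun x => Real.log (a x)) :=
  concaveOn_comp_of_mapsTo ha strictConcaveOn_log_Ioi.concaveOn
    Real.strictMonoOn_log.monotoneOn hpos

lemma concaveOn_log_effRate_add {p r : ℝ → ℝ} (hp : FailureProb p) (hr : RateOfReturn r)
    {α k : ℝ} (hα : α ∈ Ioc (0:ℝ) 1) (hk : 0 < k) :
    ConcaveOn ℝ (Ioo (0:ℝ) 1) (fun x => Real.log (effRate p r α k x 0 + k)) := by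
  have h1 : ConcaveOn ℝ (Ioo (0:ℝ) 1) (fun x => 1 - p x) :=
    (concaveOn_const 1 (convex_Ioo 0 1)).sub
      (hp.convexOn.subset Ioo_subset_Ico_self (convex_Ioo 0 1))
  have h1pos : ∀ x ∈ Ioo (0:ℝ) 1, 0 < 1 - p x := fun x hx =>
    sub_pos.2 (hp.lt_one (Ioo_subset_Ico_self hx))
  have h2 : ConcaveOn ℝ (Ioo (0:ℝ) 1) (fun x => r x ^ α) :=
    concaveOn_comp_of_mapsTo (hr.concaveOn.subset Ioo_subset_Icc_self (convex_Ioo 0 1))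
      (Real.concaveOn_rpow hα.1.le hα.2) (Real.monotoneOn_rpow_Ici_of_exponent_nonneg hα.1.le)
      (fun x hx => (hr.pos x (Ioo_subset_Icc_self hx)).le)
  have h2k : ConcaveOn ℝ (Ioo (0:ℝ) 1) (fun x => r x ^ α + k) :=
    h2.add (concaveOn_const k (convex_Ioo 0 1))
  have h2pos : ∀ x ∈ Ioo (0:ℝ) 1, 0 < r x ^ α + k := fun x hx =>
    add_pos (Real.rpow_pos_of_pos (hr.pos x (Ioo_subset_Icc_self hx)) _) hk
  refine ((concaveOn_log_comp h1 h1pos).add (concaveOn_log_comp h2k h2pos)).congr ?_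
  intro x hx
  simp only [Pi.add_apply]
  rw [effRate_zero_add_eq hr α k (Ioo_subset_Icc_self hx),
    Real.log_mul (h1pos x hx).ne' (h2pos x hx).ne']

/-- Monotonicity of `-F' / F` for `F = G - k` with `log G` concave, in cross-multiplied form.
Subtracting the constant `k` only helps, because `G v < G u` when the slope at `u` is negative. -/
lemma deriv_cross_le {F : ℝ → ℝ} {k u v : ℝ} (hk : 0 < k)
    (hconc : ConcaveOn ℝ (Ioo (0:ℝ) 1) (fun x => Real.log (F x + k)))
    (hu : u ∈ Ioo (0:ℝ) 1) (hv : v ∈ Ioo (0:ℝ) 1) (huv : u < v)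
    (hdu : DifferentiableAt ℝ F u) (hdv : DifferentiableAt ℝ F v)
    (hFu : 0 < F u) (hFv : 0 < F v) (hneg : deriv F u < 0) :
    deriv F v < 0 ∧ -deriv F u * F v ≤ -deriv F v * F u := by
  have hu' : HasDerivAt (fun x => Real.log (F x + k)) (deriv F u / (F u + k)) u :=
    (hdu.hasDerivAt.add_const k).log (by positivity)
  have hv' : HasDerivAt (fun x => Real.log (F x + k)) (deriv F v / (F v + k)) v :=
    (hdv.hasDerivAt.add_const k).log (by positivity)
  have h1 := hconc.slope_le_of_hasDerivAt hu hv huv hu'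
  have h2 := hconc.le_slope_of_hasDerivAt hu hv huv hv'
  have hu_neg : deriv F u / (F u + k) < 0 := div_neg_of_neg_of_pos hneg (by positivity)
  have hlt : F v + k < F u + k := by
    have hs := h1.trans_lt hu_neg
    rw [slope_def_field, div_neg_iff] at hs
    have hlog : Real.log (F v + k) < Real.log (F u + k) := by
      rcases hs with hs | hs <;> linarith [hs.1, hs.2]
    exact (Real.log_lt_log_iff (by positivity) (by positivity)).1 hlog
  have hcross : deriv F v * (F u + k) ≤ deriv F u * (F v + k) :=
    (div_le_div_iff₀ (by positivity) (by positivity)).1 (h2.trans h1)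
  have hvneg : deriv F v < 0 := by
    by_contra hcon
    push Not at hcon
    have a1 : 0 ≤ deriv F v * (F u + k) := by positivity
    have a2 : deriv F u * (F v + k) < 0 := mul_neg_of_neg_of_pos hneg (by positivity)
    linarith
  refine ⟨hvneg, ?_⟩
  set a := -deriv F v with ha
  set b := -deriv F u with hb
  have hc : b * (F v + k) ≤ a * (F u + k) := by rw [ha, hb]; linarith
  have hb0 : 0 < b := by rw [hb]; linarith
  -- Multiply `hc` by `F u` and use `F v * (F u + k) ≤ F u * (F v + k)`.
  have e1 : b * (F v + k) * F u ≤ a * (F u + k) * F u := mul_le_mul_of_nonneg_right hc hFu.le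
  have e2 : 0 ≤ b * k * (F u - F v) := by
    apply mul_nonneg (by positivity); linarith
  have e3 : (b * F v) * (F u + k) ≤ (a * F u) * (F u + k) := by nlinarith
  exact le_of_mul_le_mul_right e3 (by positivity)

/-! ### First-order conditions -/

/-- First-order condition for a player who invests `x`, the others investing `c`, when the
objective also contains a differentiable term `H` of the total investment. -/
lemma foc {F H : ℝ → ℝ} {α x c : ℝ} (hx : 0 < x)
    (hF : DifferentiableAt ℝ F (x + c)) (hH : DifferentiableAt ℝ H (x + c))
    (hmax : IsLocalMax (fun y => y ^ α * F (y + c) + H (y + c)) x) :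
    α * x ^ (α - 1) * F (x + c) + x ^ α * deriv F (x + c) + deriv H (x + c) = 0 := by
  have h1 : HasDerivAt (fun y : ℝ => y ^ α) (α * x ^ (α - 1)) x :=
    Real.hasDerivAt_rpow_const (Or.inl hx.ne')
  have h2 := (hF.hasDerivAt).comp_add_const x c
  have h3 := (hH.hasDerivAt).comp_add_const x c
  exact hmax.hasDerivAt_eq_zero ((h1.mul h2).add h3)

lemma pne_foc {F : ℝ → ℝ} {α x c : ℝ} (hx : x ∈ Ioo (0:ℝ) 1)
    (hF : DifferentiableAt ℝ F (x + c))
    (hmax : ∀ y ∈ Icc (0:ℝ) 1, y ^ α * F (y + c) ≤ x ^ α * F (x + c)) :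
    α * F (x + c) + x * deriv F (x + c) = 0 := by
  have h := foc (F := F) (H := fun _ => 0) (α := α) hx.1 hF (differentiableAt_const 0) (by
    filter_upwards [Icc_mem_nhds hx.1 hx.2] with y hy
    simpa using hmax y hy)
  rw [deriv_const, add_zero] at h
  have hpow : x ^ α = x ^ (α - 1) * x := by
    rw [← Real.rpow_add_one hx.1.ne', sub_add_cancel]
  have hpos : 0 < x ^ (α - 1) := Real.rpow_pos_of_pos hx.1 _
  have h' : x ^ (α - 1) * (α * F (x + c) + x * deriv F (x + c)) = 0 := by
    rw [hpow] at h; linarith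
  exact (mul_eq_zero.1 h').resolve_left hpos.ne'

lemma opt_foc {ι : Type*} [Fintype ι] [DecidableEq ι] {F : ι → ℝ → ℝ} {α x : ι → ℝ}
    (hmem : ∀ i, x i ∈ Icc (0:ℝ) 1)
    (hmax : ∀ z : ι → ℝ, (∀ i, z i ∈ Icc (0:ℝ) 1) →
      ∑ i, z i ^ α i * F i (∑ l, z l) ≤ ∑ i, x i ^ α i * F i (∑ l, x l))
    (hF : ∀ i, DifferentiableAt ℝ (F i) (∑ l, x l)) {j : ι} (hj : x j ∈ Ioo (0:ℝ) 1) :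
    α j * x j ^ (α j - 1) * F j (∑ l, x l) = -∑ i, x i ^ α i * deriv (F i) (∑ l, x l) := by
  set c := ∑ i ∈ Finset.univ.erase j, x i with hc
  have hsum : x j + c = ∑ l, x l := Finset.add_sum_erase _ _ (Finset.mem_univ j)
  set H : ℝ → ℝ := fun s => ∑ i ∈ Finset.univ.erase j, x i ^ α i * F i s with hH
  have hHd : HasDerivAt H (∑ i ∈ Finset.univ.erase j, x i ^ α i * deriv (F i) (∑ l, x l))
      (∑ l, x l) :=
    HasDerivAt.fun_sum fun i _ => (hF i).hasDerivAt.const_mul _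
  have key := foc (F := F j) (H := H) (α := α j) (c := c) hj.1 (by rw [hsum]; exact hF j)
    (by rw [hsum]; exact hHd.differentiableAt) (by
      filter_upwards [Icc_mem_nhds hj.1 hj.2] with y hy
      have hz := hmax (Function.update x j y) (by
        intro i
        by_cases hij : i = j
        · subst hij; simpa using hy
        · simpa [hij] using hmem i)
      have htot : ∑ l, Function.update x j y l = y + c := by
        rw [← Finset.add_sum_erase _ _ (Finset.mem_univ j), Function.update_self]
        congr 1
        exact Finset.sum_congr rfl fun i hi => by
          rw [Function.update_of_ne (Finset.ne_of_mem_erase hi)]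
      rw [htot, ← Finset.add_sum_erase _ _ (Finset.mem_univ j), Function.update_self,
        ← Finset.add_sum_erase (a := j) _ (fun i => x i ^ α i * F i (∑ l, x l))
          (Finset.mem_univ j), ← hsum] at hz
      have hrest : ∑ i ∈ Finset.univ.erase j, Function.update x j y i ^ α i * F i (y + c) =
          H (y + c) :=
        Finset.sum_congr rfl fun i hi => by
          rw [Function.update_of_ne (Finset.ne_of_mem_erase hi)]
      rw [hrest] at hz
      exact hz)
  rw [hsum, hHd.deriv, add_assoc,
    Finset.add_sum_erase (a := j) _ (fun i => x i ^ α i * deriv (F i) (∑ l, x l))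
      (Finset.mem_univ j)] at key
  linarith

/-! ### Positive welfare is achievable -/

lemma exists_effRate_zero_pos {ι : Type*} [Fintype ι] {p r : ℝ → ℝ} {α k : ι → ℝ}
    (hp : FailureProb p) (hr : RateOfReturn r)
    (hα : ∀ i, α i ∈ Ioc (0:ℝ) 1) (hk : ∀ i, 0 < k i) (htbar : 0 < tbar p r α k) :
    ∃ i, ∃ x ∈ Ioo (0:ℝ) 1, 0 < effRate p r (α i) (k i) x 0 := by
  obtain ⟨t, ht, i, x, hx, hpos⟩ : ∃ t : ℝ, 0 ≤ t ∧ ∃ i : ι, ∃ x ∈ Icc (0:ℝ) 1,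
      0 < effRate p r (α i) (k i) x t := by
    by_contra hcon
    have hemp : {t : ℝ | 0 ≤ t ∧ ∃ i : ι, ∃ x ∈ Icc (0:ℝ) 1,
        0 < effRate p r (α i) (k i) x t} = ∅ :=
      Set.eq_empty_iff_forall_notMem.2 fun t ht => hcon ⟨t, ht⟩
    rw [tbar, hemp, Real.sSup_empty] at htbar
    exact lt_irrefl _ htbar
  have hp0 := (hp.mem_unit x).1
  have hp1 := (hp.mem_unit x).2
  have hki := hk i
  have h0 : 0 < effRate p r (α i) (k i) x 0 := by
    rw [effRate_zero_eq hr _ _ hx]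
    unfold effRate at hpos
    split_ifs at hpos with hrt
    · have h1 : (r x - t) ^ α i ≤ r x ^ α i :=
        Real.rpow_le_rpow hrt (by linarith) (hα i).1.le
      have h2 : 1 ≤ (1 + t) ^ α i := Real.one_le_rpow (by linarith) (hα i).1.le
      have h3 := mul_le_mul_of_nonneg_right h1 (sub_nonneg.2 hp1)
      have h4 := mul_le_mul_of_nonneg_left h2 (mul_nonneg hki.le hp0)
      linarith
    · exfalso
      have h1 : 0 ≤ (t - r x) ^ α i := Real.rpow_nonneg (by linarith) _
      have h2 : 0 ≤ (1 + t) ^ α i := Real.rpow_nonneg (by linarith) _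
      have h3 : 0 ≤ k i * ((t - r x) ^ α i * (1 - p x) + (1 + t) ^ α i * p x) :=
        mul_nonneg hki.le (add_nonneg (mul_nonneg h1 (sub_nonneg.2 hp1)) (mul_nonneg h2 hp0))
      linarith
  have hx1 : x < 1 := by
    by_contra hcon
    rw [effRate_zero_of_one_le hp _ _ (not_lt.1 hcon)] at h0
    linarith
  -- The point `x` may be `0`, so it is moved slightly to the right.
  have hcont := continuousOn_effRate_zero hp hr (α i) (k i) x ⟨hx.1, hx1⟩
  have hcont' : ContinuousWithinAt (fun x => effRate p r (α i) (k i) x 0) (Ioo x 1) x :=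
    hcont.mono fun y hy => ⟨hx.1.trans hy.1.le, hy.2⟩
  have hev := hcont'.eventually (lt_mem_nhds h0)
  have : (nhdsWithin x (Ioo x 1)).NeBot := left_nhdsWithin_Ioo_neBot hx1
  obtain ⟨y, hy, hymem⟩ := (hev.and self_mem_nhdsWithin).exists
  exact ⟨i, y, ⟨hx.1.trans_lt hymem.1, hymem.2⟩, hy⟩

/-- at tax rate `t = 0`, the total investment of any social welfare
maximizing profile is at most the total investment at the pure Nash equilibrium. -/
theorem statement5 {ι : Type*} [Fintype ι] [DecidableEq ι] [Nonempty ι]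
    (p r : ℝ → ℝ) (α k : ι → ℝ)
    (hp : FailureProb p) (hr : RateOfReturn r)
    (hα : ∀ i, α i ∈ Ioc (0:ℝ) 1) (hk : ∀ i, 0 < k i)
    (htbar : 0 < tbar p r α k)
    (xOPT : ι → ℝ) (hOPTmem : ∀ i, xOPT i ∈ Icc (0:ℝ) 1)
    (hOPT : ∀ z : ι → ℝ, (∀ i, z i ∈ Icc (0:ℝ) 1) →
      ∑ i, z i ^ α i * effRate p r (α i) (k i) (∑ l, z l) 0 ≤
        ∑ i, xOPT i ^ α i * effRate p r (α i) (k i) (∑ l, xOPT l) 0)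
    (xNE : ι → ℝ) (hNE : IsPNE p r α k 0 xNE) :
    ∑ i, xOPT i ≤ ∑ i, xNE i := by
  set F : ι → ℝ → ℝ := fun i x => effRate p r (α i) (k i) x 0 with hFdef
  change ∀ z : ι → ℝ, (∀ i, z i ∈ Icc (0:ℝ) 1) →
    ∑ i, z i ^ α i * F i (∑ l, z l) ≤ ∑ i, xOPT i ^ α i * F i (∑ l, xOPT l) at hOPT
  obtain ⟨hNEmem, hNE⟩ := hNE
  change ∀ i, ∀ y ∈ Icc (0:ℝ) 1, y ^ α i * F i (y + ∑ j ∈ Finset.univ.erase i, xNE j) ≤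
    xNE i ^ α i * F i (xNE i + ∑ j ∈ Finset.univ.erase i, xNE j) at hNE
  set X := ∑ i, xOPT i with hX
  set N := ∑ i, xNE i with hN
  have hwelf : 0 < ∑ i, xOPT i ^ α i * F i X := by
    obtain ⟨i, x, hx, hpos⟩ := exists_effRate_zero_pos hp hr hα hk htbar
    have h := hOPT (Pi.single i x) (fun l => by
      by_cases hl : l = i
      · subst hl; simpa using Ioo_subset_Icc_self hx
      · simp [hl])
    have hs : ∑ l, (Pi.single i x : ι → ℝ) l = x := by simp
    rw [hs, Finset.sum_eq_single i (fun l _ hl => by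
      simp [Pi.single_eq_of_ne hl, Real.zero_rpow (hα l).1.ne']) (by simp)] at h
    rw [Pi.single_eq_same] at h
    exact (mul_pos (Real.rpow_pos_of_pos hx.1 _) hpos).trans_le h
  have hX1 : X < 1 := by
    by_contra hcon
    refine hwelf.not_ge (Finset.sum_nonpos fun i _ => ?_)
    have : F i X = -k i := effRate_zero_of_one_le hp _ _ (not_lt.1 hcon)
    rw [this]
    exact mul_nonpos_of_nonneg_of_nonpos (Real.rpow_nonneg (hOPTmem i).1 _)
      (neg_nonpos.2 (hk i).le)
  by_contra hcon
  push Not at hcon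
  have hN0 : 0 ≤ N := Finset.sum_nonneg fun i _ => (hNEmem i).1
  have hXmem : X ∈ Ioo (0:ℝ) 1 := ⟨hN0.trans_lt hcon, hX1⟩
  have hFX : ∀ i, DifferentiableAt ℝ (F i) X := fun i =>
    differentiableAt_effRate_zero hp hr _ _ hXmem
  have hle : ∀ i, xOPT i ≤ X := fun i =>
    Finset.single_le_sum (f := xOPT) (fun l _ => (hOPTmem l).1) (Finset.mem_univ i)
  have hNle : ∀ i, xNE i ≤ N := fun i =>
    Finset.single_le_sum (f := xNE) (fun l _ => (hNEmem l).1) (Finset.mem_univ i)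
  set D := -∑ i, xOPT i ^ α i * deriv (F i) X with hD
  have hfoc : ∀ j, 0 < xOPT j → α j * xOPT j ^ (α j - 1) * F j X = D := fun j hj =>
    opt_foc hOPTmem hOPT hFX ⟨hj, (hle j).trans_lt hX1⟩
  have hsign : ∀ j, 0 < xOPT j → 0 < α j * xOPT j ^ (α j - 1) := fun j hj =>
    mul_pos (hα j).1 (Real.rpow_pos_of_pos hj _)
  -- Some active player contributes positively, which fixes the sign of `D`.
  have hDpos : 0 < D := by
    obtain ⟨j, -, hj⟩ := Finset.exists_lt_of_sum_lt (s := Finset.univ) (f := fun _ : ι => (0:ℝ))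
      (by simpa using hwelf)
    have hj0 : 0 < xOPT j := by
      refine lt_of_le_of_ne (hOPTmem j).1 fun h0 => ?_
      rw [← h0, Real.zero_rpow (hα j).1.ne', zero_mul] at hj
      exact lt_irrefl _ hj
    have hFj : 0 < F j X := pos_of_mul_pos_right hj (Real.rpow_nonneg hj0.le _)
    rw [← hfoc j hj0]
    exact mul_pos (hsign j hj0) hFj
  have hFpos : ∀ j, 0 < xOPT j → 0 < F j X := fun j hj => by
    have h := hDpos
    rw [← hfoc j hj] at h
    exact pos_of_mul_pos_right h (hsign j hj).le
  have hact : ∀ j, 0 < xOPT j → 0 < xNE j ∧ deriv (F j) X < 0 ∧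
      α j * F j X ≤ xNE j * -deriv (F j) X := by
    intro j hj
    set c := ∑ l ∈ Finset.univ.erase j, xNE l with hc
    have hsum : xNE j + c = N := Finset.add_sum_erase _ _ (Finset.mem_univ j)
    have hnj := (hNEmem j).1
    have hNj := hNle j
    -- The deviation `X - c` of player `j` moves the total to `X`.
    have hdev := hNE j (X - c) ⟨by linarith, by linarith⟩
    rw [hsum, sub_add_cancel] at hdev
    have hpos : 0 < xNE j ^ α j * F j N :=
      (mul_pos (Real.rpow_pos_of_pos (by linarith) _) (hFpos j hj)).trans_le hdev
    have hn0 : 0 < xNE j := by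
      refine lt_of_le_of_ne hnj fun h0 => ?_
      rw [← h0, Real.zero_rpow (hα j).1.ne', zero_mul] at hpos
      exact lt_irrefl _ hpos
    have hFN : 0 < F j N := pos_of_mul_pos_right hpos (Real.rpow_nonneg hnj _)
    have hNmem : N ∈ Ioo (0:ℝ) 1 := ⟨hn0.trans_le hNj, hcon.trans hX1⟩
    have hdN : DifferentiableAt ℝ (F j) N := differentiableAt_effRate_zero hp hr _ _ hNmem
    have hne := pne_foc (F := F j) (α := α j) (x := xNE j) (c := c)
      ⟨hn0, hNj.trans_lt hNmem.2⟩ (by rw [hsum]; exact hdN) (hNE j)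
    rw [hsum] at hne
    have hαF : 0 < α j * F j N := mul_pos (hα j).1 hFN
    have hdneg : deriv (F j) N < 0 := by
      by_contra hnn
      have := mul_nonneg hn0.le (not_lt.1 hnn)
      linarith
    obtain ⟨hXneg, hcross⟩ := deriv_cross_le (hk j)
      (concaveOn_log_effRate_add hp hr (hα j) (hk j)) hNmem hXmem hcon hdN (hFX j) hFN
      (hFpos j hj) hdneg
    refine ⟨hn0, hXneg, ?_⟩
    have e1 := mul_le_mul_of_nonneg_left hcross hn0.le
    have e2 : xNE j * (-deriv (F j) N) = α j * F j N := by linarith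
    have e3 : (α j * F j X) * F j N ≤ (xNE j * -deriv (F j) X) * F j N := by
      calc (α j * F j X) * F j N = (xNE j * (-deriv (F j) N)) * F j X := by rw [e2]; ring
        _ = xNE j * (-deriv (F j) N * F j X) := by ring
        _ ≤ xNE j * (-deriv (F j) X * F j N) := e1
        _ = _ := by ring
    exact le_of_mul_le_mul_right e3 hFN
  refine hcon.not_ge (Finset.sum_le_sum fun j _ => ?_)
  rcases (hOPTmem j).1.eq_or_lt with h0 | hj
  · rw [← h0]; exact (hNEmem j).1
  obtain ⟨hn0, hXneg, hbound⟩ := hact j hj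
  -- All terms of `D` are nonnegative; only the one of player `j` is kept.
  have hDge : xOPT j ^ α j * -deriv (F j) X ≤ D := by
    have hterms : ∀ i ∈ Finset.univ, 0 ≤ xOPT i ^ α i * -deriv (F i) X := by
      intro i _
      rcases (hOPTmem i).1.eq_or_lt with h0 | hi
      · rw [← h0, Real.zero_rpow (hα i).1.ne', zero_mul]
      · exact mul_nonneg (Real.rpow_nonneg hi.le _) (neg_nonneg.2 (hact i hi).2.1.le)
    have := Finset.single_le_sum hterms (Finset.mem_univ j)
    simpa [hD, Finset.sum_neg_distrib] using this
  rw [← hfoc j hj] at hDge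
  have hpow : xOPT j ^ α j = xOPT j ^ (α j - 1) * xOPT j := by
    rw [← Real.rpow_add_one hj.ne', sub_add_cancel]
  have hq : 0 < xOPT j ^ (α j - 1) := Real.rpow_pos_of_pos hj _
  have e1 : xOPT j * -deriv (F j) X ≤ α j * F j X := by
    refine le_of_mul_le_mul_left ?_ hq
    rw [hpow] at hDge
    linarith
  exact le_of_mul_le_mul_right (e1.trans hbound) (neg_pos.2 hXneg)
end
end

section
/- Consider a Fragile CPR game with strictly decreasing rate of return r, and players with arbitrary heterogeneous prospect-theoretic preferences α_i ∈ (0,1], k_i > 0. Then for any tax rates 0 ≤ t_2 < t_1 < t̄, the PNE utilizations satisfy x^{t_1}_NE ≤ x^{t_2}_NE; that is, a higher tax rate always yields weakly smaller utilization. -/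
/-!
Suppose the utilization were larger at the higher tax rate: `X2 < X1`, where `X1`, `X2` are
the total investments at `t1`, `t2`. It is shown that then every player invests at least as
much at `t2` as at `t1`, which contradicts `X2 < X1`.

Only a player with `x1 i > 0` needs an argument. Such a player can secure `0` by not investing,
so her effective rate at `(X1, t1)` is nonnegative, which forces `X1 < 1` and `t1 < r X1`
(`lt_one_and_pos_of_effRate_nonneg`). Where `r X > t` and `X ∈ (0, 1)`, with
`u = ((1 + t) / (r X - t)) ^ α`, the first-order condition for an equilibrium investment
`x > 0` can be written, after division by `(r X - t) ^ α * (1 - p X)`, as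

  `x * D = α * N`,  `N = 1 - k * u * p X / (1 - p X)`,
  `D = α * (-r' X) / (r X - t) + p' X * (1 + k * u) / (1 - p X)`

(`foc`). In this form every factor is visibly monotone in both `X` and `t`: since `p` is
increasing and convex and `r` is decreasing and concave, `N` decreases and `D` increases when
`X` or `t` increases (`normNum_lt`, `normDen_le`). The rate at `(X2, t2)`, and at any
utilization slightly above `X2`, is therefore positive, so that `x2 i > 0`, and from `N1 ≤ N2`
and `0 < D2 ≤ D1` one gets `x1 i ≤ x2 i`.
-/

open Real Set

noncomputable section

/-! ### Normalized effective rate and its derivative -/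

/-- The effective rate divided by `(r X - t) ^ α * (1 - p X)`, meaningful for
`t < r X` and `p X < 1`. -/
def normNum (p r : ℝ → ℝ) (α k X t : ℝ) : ℝ :=
  1 - k * ((1 + t) ^ α / (r X - t) ^ α) * (p X / (1 - p X))

/-- Minus the `X`-derivative of the effective rate, divided by `(r X - t) ^ α * (1 - p X)`,
meaningful for `t < r X` and `p X < 1`. -/
def normDen (p r : ℝ → ℝ) (α k X t : ℝ) : ℝ :=
  α * (-deriv r X / (r X - t)) +
    deriv p X * (1 + k * ((1 + t) ^ α / (r X - t) ^ α)) / (1 - p X)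

/-! ### Regularity and signs of `p` and `r` -/

lemma FailureProb.lt_one_s12 {p : ℝ → ℝ} (hp : FailureProb p) {X : ℝ} (h0 : 0 ≤ X) (h1 : X < 1) :
    p X < 1 :=
  (hp.strictMonoOn ⟨h0, h1⟩ (b := (X + 1) / 2) ⟨by linarith, by linarith⟩ (by linarith)).trans_le
    (hp.mem_unit _).2

lemma FailureProb.pos {p : ℝ → ℝ} (hp : FailureProb p) {X : ℝ} (h0 : 0 < X) (h1 : X < 1) :
    0 < p X :=
  (hp.mem_unit 0).1.trans_lt (hp.strictMonoOn ⟨le_rfl, by linarith⟩ ⟨h0.le, h1⟩ h0)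

lemma FailureProb.differentiableAt {p : ℝ → ℝ} (hp : FailureProb p) {X : ℝ}
    (hX : X ∈ Ioo (0 : ℝ) 1) : DifferentiableAt ℝ p X :=
  (hp.contDiffOn.differentiableOn one_ne_zero).differentiableAt (Ico_mem_nhds hX.1 hX.2)

lemma RateOfReturn.differentiableAt {r : ℝ → ℝ} (hr : RateOfReturn r) {X : ℝ}
    (hX : X ∈ Ioo (0 : ℝ) 1) : DifferentiableAt ℝ r X :=
  (hr.contDiffOn.differentiableOn one_ne_zero).differentiableAt (Icc_mem_nhds hX.1 hX.2)

lemma FailureProb.deriv_nonneg {p : ℝ → ℝ} (hp : FailureProb p) {X : ℝ}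
    (hX : X ∈ Ioo (0 : ℝ) 1) : 0 ≤ deriv p X := by
  rw [← (hp.differentiableAt hX).derivWithin (uniqueDiffOn_Ioo (0 : ℝ) 1 X hX)]
  exact (hp.strictMonoOn.monotoneOn.mono Ioo_subset_Ico_self).derivWithin_nonneg

lemma deriv_nonpos_of_dec {r : ℝ → ℝ} (hr : RateOfReturn r)
    (hdec : StrictAntiOn r (Icc (0 : ℝ) 1)) {X : ℝ}
    (hX : X ∈ Ioo (0 : ℝ) 1) : deriv r X ≤ 0 := by
  rw [← (hr.differentiableAt hX).derivWithin (uniqueDiffOn_Ioo (0 : ℝ) 1 X hX)]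
  exact (hdec.antitoneOn.mono Ioo_subset_Icc_self).derivWithin_nonpos

/-! ### Where the effective rate is nonnegative -/

/-- A nonnegative rate at positive utilization is only possible below the failure threshold and
where the return strictly exceeds the tax. -/
lemma lt_one_and_pos_of_effRate_nonneg {p r : ℝ → ℝ} (hp : FailureProb p) {α k X t : ℝ}
    (hα : 0 < α) (hk : 0 < k) (ht : 0 ≤ t) (hX : 0 < X) (h : 0 ≤ effRate p r α k X t) :
    X < 1 ∧ 0 < r X - t := by
  have hu : 0 < k * (1 + t) ^ α := by positivity
  have hX1 : X < 1 := by
    by_contra hc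
    have hpX := hp.eq_one X (not_lt.mp hc)
    unfold effRate at h
    rw [hpX] at h
    split_ifs at h <;> nlinarith
  refine ⟨hX1, ?_⟩
  have hp0 := hp.pos hX hX1
  have hp1 := hp.lt_one_s12 hX.le hX1
  by_contra hc
  have hpu := mul_pos hu hp0
  unfold effRate at h
  split_ifs at h with hif
  · have h0 : r X - t = 0 := le_antisymm (not_lt.mp hc) hif
    rw [h0, zero_rpow hα.ne'] at h
    linarith
  · have h1 : 0 ≤ k * ((t - r X) ^ α * (1 - p X)) :=
      mul_nonneg hk.le (mul_nonneg (rpow_nonneg (by linarith) _) (by linarith))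
    linarith

lemma effRate_eq {p r : ℝ → ℝ} {α k X t : ℝ} (hR : 0 < r X - t) (hp1 : p X < 1) :
    effRate p r α k X t = (r X - t) ^ α * (1 - p X) * normNum p r α k X t := by
  have h1 : (r X - t) ^ α ≠ 0 := (rpow_pos_of_pos hR _).ne'
  have h2 : 1 - p X ≠ 0 := by linarith
  rw [effRate, if_pos hR.le, normNum]
  field_simp

/-! ### Monotonicity in utilization and tax -/

lemma ratio_lt {α t1 t2 R1 R2 : ℝ} (hα : 0 < α) (ht2 : 0 ≤ t2) (ht : t2 < t1)
    (hR1 : 0 < R1) (hR : R1 < R2) :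
    (1 + t2) ^ α / R2 ^ α < (1 + t1) ^ α / R1 ^ α := by
  have h1 : (1 + t2) ^ α < (1 + t1) ^ α := rpow_lt_rpow (by linarith) (by linarith) hα
  have h2 : R1 ^ α < R2 ^ α := rpow_lt_rpow hR1.le hR hα
  have h3 : 0 < R1 ^ α := rpow_pos_of_pos hR1 _
  have h4 : 0 ≤ (1 + t2) ^ α := rpow_nonneg (by linarith) _
  exact div_lt_div₀ h1 h2.le (h4.trans h1.le) h3

lemma sub_lt_sub_of_dec {r : ℝ → ℝ} (hdec : StrictAntiOn r (Icc (0 : ℝ) 1)) {X1 X2 t1 t2 : ℝ}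
    (ht : t2 < t1) (hX2 : 0 ≤ X2) (hX : X2 < X1) (hX1 : X1 < 1) :
    r X1 - t1 < r X2 - t2 := by
  have := hdec ⟨hX2, by linarith⟩ ⟨by linarith, hX1.le⟩ hX
  linarith

lemma normNum_lt {p r : ℝ → ℝ} (hp : FailureProb p) (hdec : StrictAntiOn r (Icc (0 : ℝ) 1))
    {α k X1 X2 t1 t2 : ℝ} (hα : 0 < α) (hk : 0 < k) (ht2 : 0 ≤ t2) (ht : t2 < t1)
    (hX2 : 0 ≤ X2) (hX : X2 < X1) (hX1 : X1 < 1) (hR : 0 < r X1 - t1) :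
    normNum p r α k X1 t1 < normNum p r α k X2 t2 := by
  have hu := ratio_lt hα ht2 ht hR (sub_lt_sub_of_dec hdec ht hX2 hX hX1)
  have hu2 : 0 ≤ (1 + t2) ^ α / (r X2 - t2) ^ α :=
    div_nonneg (rpow_nonneg (by linarith) _)
      (rpow_nonneg (hR.trans (sub_lt_sub_of_dec hdec ht hX2 hX hX1)).le _)
  have hq1 : p X1 < 1 := hp.lt_one_s12 (by linarith) hX1
  have hq2 : 0 ≤ p X2 := (hp.mem_unit _).1
  have hq : p X2 < p X1 := hp.strictMonoOn ⟨hX2, by linarith⟩ ⟨by linarith, hX1⟩ hX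
  have hw : p X2 / (1 - p X2) < p X1 / (1 - p X1) :=
    div_lt_div₀ hq (by linarith) (by linarith) (by linarith)
  have hw2 : 0 ≤ p X2 / (1 - p X2) := div_nonneg hq2 (by linarith)
  unfold normNum
  have := mul_lt_mul'' (mul_lt_mul_of_pos_left hu hk) hw (by positivity) hw2
  linarith

lemma normDen_le {p r : ℝ → ℝ} (hp : FailureProb p) (hr : RateOfReturn r)
    (hdec : StrictAntiOn r (Icc (0 : ℝ) 1))
    {α k X1 X2 t1 t2 : ℝ} (hα : 0 < α) (hk : 0 < k) (ht2 : 0 ≤ t2) (ht : t2 < t1)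
    (hX2 : 0 < X2) (hX : X2 < X1) (hX1 : X1 < 1) (hR : 0 < r X1 - t1) :
    normDen p r α k X2 t2 ≤ normDen p r α k X1 t1 := by
  have hRR := sub_lt_sub_of_dec hdec ht hX2.le hX hX1
  have hu := ratio_lt hα ht2 ht hR hRR
  have hu2 : 0 ≤ (1 + t2) ^ α / (r X2 - t2) ^ α :=
    div_nonneg (rpow_nonneg (by linarith) _) (rpow_nonneg (hR.trans hRR).le _)
  have hq1 : p X1 < 1 := hp.lt_one_s12 (by linarith) hX1
  have hq : p X2 < p X1 := hp.strictMonoOn ⟨hX2.le, by linarith⟩ ⟨by linarith, hX1⟩ hX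
  have m1 : X1 ∈ Ioo (0 : ℝ) 1 := ⟨by linarith, hX1⟩
  have m2 : X2 ∈ Ioo (0 : ℝ) 1 := ⟨hX2, by linarith⟩
  have hdp : deriv p X2 ≤ deriv p X1 :=
    (hp.convexOn.subset Ioo_subset_Ico_self (convex_Ioo 0 1)).monotoneOn_deriv
      (fun x hx => hp.differentiableAt hx) m2 m1 hX.le
  have hdr : deriv r X1 ≤ deriv r X2 :=
    (hr.concaveOn.subset Ioo_subset_Icc_self (convex_Ioo 0 1)).antitoneOn_deriv
      (fun x hx => hr.differentiableAt hx) m2 m1 hX.le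
  have hdp2 := hp.deriv_nonneg m2
  have hdr2 := deriv_nonpos_of_dec hr hdec m2
  have hku : k * ((1 + t2) ^ α / (r X2 - t2) ^ α) ≤ k * ((1 + t1) ^ α / (r X1 - t1) ^ α) :=
    mul_le_mul_of_nonneg_left hu.le hk.le
  have hku2 : 0 ≤ k * ((1 + t2) ^ α / (r X2 - t2) ^ α) := mul_nonneg hk.le hu2
  unfold normDen
  refine add_le_add (mul_le_mul_of_nonneg_left ?_ hα.le) ?_
  · exact div_le_div₀ (by linarith) (by linarith) hR hRR.le
  · refine div_le_div₀ (mul_nonneg (by linarith) (by linarith)) ?_ (by linarith) (by linarith)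
    exact mul_le_mul hdp (by linarith) (by linarith) (by linarith)

/-! ### Comparison of best responses -/

/-- First-order condition for an interior best response `b` to the others' total `s`. -/
lemma foc_s12 {p r : ℝ → ℝ} (hp : FailureProb p) (hr : RateOfReturn r) {α k t s b : ℝ}
    (hb : 0 < b) (hs : 0 ≤ s) (hbs : b + s < 1) (hR : 0 < r (b + s) - t)
    (hbr : ∀ y ∈ Icc (0 : ℝ) 1,
      y ^ α * effRate p r α k (y + s) t ≤ b ^ α * effRate p r α k (b + s) t) :
    b * normDen p r α k (b + s) t = α * normNum p r α k (b + s) t := by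
  have hX : b + s ∈ Ioo (0 : ℝ) 1 := ⟨by linarith, hbs⟩
  have hp1 : p (b + s) < 1 := hp.lt_one_s12 hX.1.le hX.2
  have dp : HasDerivAt (fun y => p (y + s)) (deriv p (b + s)) b :=
    (hp.differentiableAt hX).hasDerivAt.comp_add_const b s
  have dr : HasDerivAt (fun y => r (y + s)) (deriv r (b + s)) b :=
    (hr.differentiableAt hX).hasDerivAt.comp_add_const b s
  have hmax : IsLocalMax (fun y => y ^ α * effRate p r α k (y + s) t) b :=
    Filter.mem_of_superset (Icc_mem_nhds hb (by linarith : b < 1)) hbr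
  have hev : (fun y => y ^ α * effRate p r α k (y + s) t) =ᶠ[nhds b] fun y => y ^ α *
      ((r (y + s) - t) ^ α * (1 - p (y + s)) - k * (1 + t) ^ α * p (y + s)) := by
    have hc : ContinuousAt (fun y => r (y + s) - t) b := (dr.sub_const t).continuousAt
    filter_upwards [hc.eventually (lt_mem_nhds hR)] with y hy
    rw [effRate, if_pos (le_of_lt hy)]
  have hder := ((hasDerivAt_id b).rpow_const (p := α) (Or.inl hb.ne')).mul
    ((((dr.sub_const t).rpow_const (p := α) (Or.inl hR.ne')).mul (dp.const_sub 1)).sub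
      (dp.const_mul (k * (1 + t) ^ α)))
  have h0 := (hmax.congr hev).hasDerivAt_eq_zero hder
  simp only [id, Pi.sub_apply, Pi.mul_apply, rpow_sub_one hb.ne', rpow_sub_one hR.ne'] at h0
  have e1 : (r (b + s) - t) ^ α ≠ 0 := (rpow_pos_of_pos hR _).ne'
  have e2 : 1 - p (b + s) ≠ 0 := by linarith
  have e3 : b ^ α ≠ 0 := (rpow_pos_of_pos hb _).ne'
  have e4 := hR.ne'
  have e5 := hb.ne'
  unfold normNum normDen
  generalize (r (b + s) - t) ^ α = A at *
  generalize r (b + s) - t = R at *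
  generalize b ^ α = B at *
  generalize (1 + t) ^ α = C at *
  generalize deriv p (b + s) = P' at *
  generalize deriv r (b + s) = R' at *
  generalize p (b + s) = P at *
  field_simp at h0 ⊢
  refine mul_left_cancel₀ e3 ?_
  linear_combination -h0

/-- With both utilization and tax strictly smaller, a nonnegative rate becomes positive. -/
lemma effRate_pos_of_lt {p r : ℝ → ℝ} (hp : FailureProb p)
    (hdec : StrictAntiOn r (Icc (0 : ℝ) 1)) {α k X1 X2 t1 t2 : ℝ} (hα : 0 < α) (hk : 0 < k)
    (ht2 : 0 ≤ t2) (ht : t2 < t1) (hX2 : 0 ≤ X2) (hX : X2 < X1)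
    (h : 0 ≤ effRate p r α k X1 t1) : 0 < effRate p r α k X2 t2 := by
  obtain ⟨hX1, hR⟩ := lt_one_and_pos_of_effRate_nonneg hp hα hk (by linarith) (by linarith) h
  have hp1 := hp.lt_one_s12 (by linarith : 0 ≤ X1) hX1
  have hp2 := hp.lt_one_s12 hX2 (by linarith)
  have hR2 := hR.trans (sub_lt_sub_of_dec hdec ht hX2 hX hX1)
  rw [effRate_eq hR hp1] at h
  have hN : 0 ≤ normNum p r α k X1 t1 :=
    nonneg_of_mul_nonneg_right h (mul_pos (rpow_pos_of_pos hR _) (by linarith))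
  rw [effRate_eq hR2 hp2]
  exact mul_pos (mul_pos (rpow_pos_of_pos hR2 _) (by linarith))
    (hN.trans_lt (normNum_lt hp hdec hα hk ht2 ht hX2 hX hX1 hR))

/-- Best responses `b1`, `b2` of one player, with total utilizations `b2 + s2 < b1 + s1` at
taxes `t2 < t1`, satisfy `b1 ≤ b2`. -/
lemma bestResponse_le {p r : ℝ → ℝ} (hp : FailureProb p) (hr : RateOfReturn r)
    (hdec : StrictAntiOn r (Icc (0 : ℝ) 1)) {α k t1 t2 s1 s2 b1 b2 : ℝ} (hα : 0 < α)
    (hk : 0 < k) (ht2 : 0 ≤ t2) (ht : t2 < t1) (hs1 : 0 ≤ s1) (hs2 : 0 ≤ s2)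
    (h1 : IsBestResponse p r α k t1 s1 b1) (h2 : IsBestResponse p r α k t2 s2 b2)
    (hX : b2 + s2 < b1 + s1) : b1 ≤ b2 := by
  obtain ⟨⟨hb1, -⟩, hbr1⟩ := h1
  obtain ⟨⟨hb2, -⟩, hbr2⟩ := h2
  rcases hb1.eq_or_lt with hb1 | hb1
  · rw [← hb1]; exact hb2
  have hf1 : 0 ≤ effRate p r α k (b1 + s1) t1 := by
    have := hbr1 0 ⟨le_rfl, zero_le_one⟩
    rw [zero_rpow hα.ne', zero_mul] at this
    exact nonneg_of_mul_nonneg_right this (rpow_pos_of_pos hb1 _)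
  obtain ⟨hX1, hR1⟩ :=
    lt_one_and_pos_of_effRate_nonneg hp hα hk (by linarith) (by linarith) hf1
  have hb2' : 0 < b2 := by
    rcases hb2.eq_or_lt with hb2 | hb2
    · -- Half the gap between the utilizations would be a profitable investment.
      subst hb2
      have hy : 0 < (b1 + s1 - s2) / 2 := by linarith
      have hf := effRate_pos_of_lt hp hdec (X2 := (b1 + s1 - s2) / 2 + s2) hα hk ht2 ht
        (by linarith) (by linarith) hf1
      have := hbr2 _ ⟨hy.le, by linarith⟩
      rw [zero_rpow hα.ne', zero_mul] at this
      exact absurd (mul_pos (rpow_pos_of_pos hy α) hf) (not_lt.mpr this)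
    · exact hb2
  have hX2 : 0 < b2 + s2 := by linarith
  have hR2 := hR1.trans (sub_lt_sub_of_dec hdec ht hX2.le hX hX1)
  have e1 := foc_s12 hp hr hb1 hs1 hX1 hR1 hbr1
  have e2 := foc_s12 hp hr hb2' hs2 (by linarith) hR2 hbr2
  have hN := normNum_lt hp hdec hα hk ht2 ht hX2.le hX hX1 hR1
  have hD := normDen_le hp hr hdec hα hk ht2 ht hX2 hX hX1 hR1
  have hN1 : 0 ≤ normNum p r α k (b1 + s1) t1 := by
    have hp1 := hp.lt_one_s12 (by linarith : 0 ≤ b1 + s1) hX1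
    rw [effRate_eq hR1 hp1] at hf1
    exact nonneg_of_mul_nonneg_right hf1 (mul_pos (rpow_pos_of_pos hR1 _) (by linarith))
  have hD2 : 0 < normDen p r α k (b2 + s2) t2 :=
    pos_of_mul_pos_right (e2 ▸ mul_pos hα (hN1.trans_lt hN)) hb2
  refine le_of_mul_le_mul_right ?_ (hD2.trans_le hD)
  calc b1 * normDen p r α k (b1 + s1) t1 = α * normNum p r α k (b1 + s1) t1 := e1
    _ ≤ α * normNum p r α k (b2 + s2) t2 := mul_le_mul_of_nonneg_left hN.le hα.le
    _ = b2 * normDen p r α k (b2 + s2) t2 := e2.symm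
    _ ≤ b2 * normDen p r α k (b1 + s1) t1 := mul_le_mul_of_nonneg_left hD hb2


/-- for a strictly decreasing rate of return and arbitrary
heterogeneous prospect-theoretic preferences, the PNE utilization is
non-increasing in the tax rate: `0 ≤ t_2 < t_1 < t̄` implies
`x^{t_1}_NE ≤ x^{t_2}_NE`. -/
theorem statement12 {ι : Type*} [Fintype ι] [DecidableEq ι] [Nonempty ι]
    (p r : ℝ → ℝ) (α k : ι → ℝ)
    (hp : FailureProb p) (hr : RateOfReturn r)
    (hdec : StrictAntiOn r (Icc (0:ℝ) 1))
    (hα : ∀ i, α i ∈ Ioc (0:ℝ) 1) (hk : ∀ i, 0 < k i)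
    (t1 t2 : ℝ) (ht2 : 0 ≤ t2) (h21 : t2 < t1) (h1 : t1 < tbar p r α k)
    (x1 x2 : ι → ℝ)
    (hx1 : IsPNE p r α k t1 x1) (hx2 : IsPNE p r α k t2 x2) :
    ∑ i, x1 i ≤ ∑ i, x2 i := by
  by_contra! hlt
  refine absurd (Finset.sum_le_sum fun i _ => ?_) (not_le.mpr hlt)
  have hsum (x : ι → ℝ) : x i + ∑ j ∈ Finset.univ.erase i, x j = ∑ j, x j :=
    Finset.add_sum_erase _ x (Finset.mem_univ i)
  exact bestResponse_le hp hr hdec (hα i).1 (hk i) ht2 h21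
    (Finset.sum_nonneg fun j _ => (hx1.1 j).1) (Finset.sum_nonneg fun j _ => (hx2.1 j).1)
    ⟨hx1.1 i, hx1.2 i⟩ ⟨hx2.1 i, hx2.2 i⟩ (by rw [hsum, hsum]; exact hlt)
end
end
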